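/- If u ∈ ℚ⟨a,b⟩ is an eigenvector of the Tchebyshev transform of the second kind U with eigenvalue λ, then (a−b)·u is also an eigenvector of U with the same eigenvalue λ. -/

import Mathlib

open scoped TensorProduct

noncomputable section

namespace Tcheb

/-! ### The algebra `R⟨a,b⟩` of ab-polynomials -/

/-- Words in the two noncommuting letters `a` (encoded `true`) and `b` (encoded `false`). -/
abbrev ABWord : Type := FreeMonoid Bool

/-- The ring `R⟨a,b⟩` of polynomials in two noncommuting variables `a` and `b`. -/
abbrev AB (R : Type) [CommRing R] : Type := MonoidAlgebra R ABWord

variable (R : Type) [CommRing R]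

/-- The ab-monomial corresponding to a word. -/
def word (l : List Bool) : AB R := MonoidAlgebra.of R ABWord (FreeMonoid.ofList l)

/-- The variable `a`. -/
def av : AB R := word R [true]
/-- The variable `b`. -/
def bv : AB R := word R [false]
/-- `c = a + b`. -/
def cv : AB R := av R + bv R
/-- `d = ab + ba`. -/
def dv : AB R := av R * bv R + bv R * av R
/-- `a - b`. -/
def ev : AB R := av R - bv R

/-- The linear map defined by prescribing values on the basis of ab-monomials. -/
def onBasis {M : Type} [AddCommMonoid M] [Module R M] (f : List Bool → M) :
    AB R →ₗ[R] M :=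
  (Finsupp.lift M R ABWord fun w => f (FreeMonoid.toList w)) ∘ₗ
    (MonoidAlgebra.coeffLinearEquiv R).toLinearMap

/-- The algebra map `A` with `A(a) = 1`, `A(b) = 0`. -/
def Amap : AB R →ₐ[R] R :=
  MonoidAlgebra.lift R R ABWord (FreeMonoid.lift fun x => if x then (1 : R) else 0)

/-- The coproduct on `R⟨a,b⟩`: on an ab-monomial `u₁ ⋯ u_k` it is
`Σ_{i=1}^k u₁ ⋯ u_{i-1} ⊗ u_{i+1} ⋯ u_k`. -/
def Delta : AB R →ₗ[R] AB R ⊗[R] AB R :=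
  onBasis R fun w => ∑ i ∈ Finset.range w.length,
    word R (w.take i) ⊗ₜ[R] word R (w.drop (i + 1))

/-- The linear map `C(u) = 2·A(u) + Σ_u A(u₍₁₎)·A(u₍₂₎)`. -/
def Cmap : AB R →ₗ[R] R :=
  2 • (Amap R).toLinearMap +
    (LinearMap.mul' R R ∘ₗ
      TensorProduct.map (Amap R).toLinearMap (Amap R).toLinearMap) ∘ₗ Delta R

/-- `κ(u) = A(u)·(a-b)^(deg u)` on homogeneous `u`, extended linearly. -/
def kappa : AB R →ₗ[R] AB R :=
  onBasis R fun w => Amap R (word R w) • ev R ^ w.length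

/-- `ν(u) = C(u)·(a-b)^(deg u)` on homogeneous `u`, extended linearly. -/
def nuMap : AB R →ₗ[R] AB R :=
  onBasis R fun w => Cmap R (word R w) • ev R ^ w.length

end Tcheb

namespace Tcheb

/-- Cutting a word into the list of segments between the (sorted) cut positions. -/
def segments : List Bool → List ℕ → List (List Bool)
  | l, [] => [l]
  | l, i :: rest => l.take i :: segments (l.drop (i + 1)) (rest.map fun j => j - (i + 1))
  termination_by _ cuts => cuts.length
  decreasing_by simp

variable (R : Type) [CommRing R]

/-- For segments `[s₁, …, s_k]` this is `ν(s₁)·b·ν(s₂)·b ⋯ b·ν(s_{k-1})·b·κ(s_k)`. -/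
def chainProd : List (List Bool) → AB R
  | [] => 1
  | [s] => kappa R (word R s)
  | s :: rest => nuMap R (word R s) * bv R * chainProd rest

/-- The Tchebyshev transform (of the first kind) on ab-polynomials:
`T(u) = Σ_{k ≥ 1} Σ_u ν(u₍₁₎)·b·ν(u₍₂₎)·b ⋯ b·ν(u₍ₖ₋₁₎)·b·κ(u₍ₖ₎)`,
where the inner sum is over the `k`-fold coproduct.  On the ab-monomial basis this
is the sum, over all sets of positions of deleted letters, of the corresponding
products over the resulting segments. -/
def Tmap : AB R →ₗ[R] AB R :=
  onBasis R fun w => ∑ S : Finset (Fin w.length),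
    chainProd R (segments w ((S.sort (· ≤ ·)).map Fin.val))

/-- The `ω` map on a word: replace each occurrence of `ab` by `2d` and all
remaining letters by `c`. -/
def omegaWord : List Bool → AB R
  | [] => 1
  | true :: false :: rest => (2 * dv R) * omegaWord rest
  | _ :: rest => cv R * omegaWord rest

/-- The `ω` map of Billera–Ehrenborg–Readdy. -/
def omegaMap : AB R →ₗ[R] AB R := onBasis R fun w => omegaWord R w

/-- The reversal involution `u ↦ u*` of ab-polynomials. -/
def revMap : AB R →ₗ[R] AB R := onBasis R fun w => word R w.reverse

/-- `H*(1) = 0` and `H*(u·a) = H*(u·b) = u`. -/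
def Hstar : AB R →ₗ[R] AB R :=
  onBasis R fun w => if w = [] then 0 else word R w.dropLast

/-- The Tchebyshev transform of the second kind `U(u) = H*(T(u·a))`. -/
def Umap : AB R →ₗ[R] AB R := Hstar R ∘ₗ Tmap R ∘ₗ LinearMap.mulRight R (av R)

/-- `σ(u) = Σ_u κ(u₍₁₎)·b·T(u₍₂₎)`. -/
def sigmaMap : AB R →ₗ[R] AB R :=
  LinearMap.mul' R (AB R) ∘ₗ
    TensorProduct.map (LinearMap.mulRight R (bv R) ∘ₗ kappa R) (Tmap R) ∘ₗ Delta R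

/-! ### Graded posets and the ab-index -/

/-- `rk` is a rank function for a bounded poset: `rk ⊥ = 0` and covers raise rank by one. -/
def IsRankFun (α : Type) [PartialOrder α] [OrderBot α] (rk : α → ℕ) : Prop :=
  rk ⊥ = 0 ∧ ∀ x y : α, x ⋖ y → rk y = rk x + 1

/-- `f` lists the elements of a chain in increasing order with respect to the
strict order relation `lt`. -/
def IsStrictChain {α : Type} (lt : α → α → Prop) {n : ℕ} (f : Fin (n + 1) → α) : Prop :=
  ∀ i j : Fin (n + 1), i < j → lt (f i) (f j)

/-- The weight of a chain `x₀ < x₁ < ⋯ < x_k`: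
`(a-b)^{ρ(x₀,x₁)-1}·b·(a-b)^{ρ(x₁,x₂)-1}·b ⋯ b·(a-b)^{ρ(x_{k-1},x_k)-1}`. -/
def chainWt {α : Type} (rk : α → ℕ) {n : ℕ} (f : Fin (n + 1) → α) : AB R :=
  (List.intersperse (bv R)
    (List.ofFn fun i : Fin n => ev R ^ (rk (f i.succ) - rk (f i.castSucc) - 1))).prod

/-- The ab-index `Ψ` of the graded poset with strict order relation `lt`, rank
function `rk`, minimum `b` and maximum `t`: the sum of the weights of all chains
from `b` to `t`. -/
def PsiRel {α : Type} (lt : α → α → Prop) (rk : α → ℕ) (b t : α) : AB R :=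
  ∑ᶠ (n : ℕ), ∑ᶠ (f : Fin (n + 1) → α)
    (_ : IsStrictChain lt f ∧ f 0 = b ∧ f (Fin.last n) = t), chainWt R rk f

end Tcheb

namespace Tcheb

/-! ### The Tchebyshev transform of a graded poset -/

section TPoset

variable (α : Type) [PartialOrder α] [BoundedOrder α]

/-- The elements `[x,y]` of the Tchebyshev transform: intervals of `P ∪ {-1̂}`,
i.e. pairs `(x,y)` with `x ∈ P ∪ {-1̂}`, `y ∈ P` and `x < y`. -/
def TPel : Type := {p : WithBot α × α // p.1 < (p.2 : WithBot α)}

/-- The underlying set of the Tchebyshev transform `T(P)`: the intervals `[x,y]`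
together with a new maximum element (`none`). -/
def TP : Type := Option (TPel α)

/-- The cover relation of the Tchebyshev transform `T(P)`:
`[x,y] ⋖ [y,w]` and `[x,y] ⋖ [x,w]` whenever `y ⋖ w` in `P`, and `[x,1̂] ⋖ 1̂_{T(P)}`. -/
inductive TPcov : TP α → TP α → Prop
  | up {x : WithBot α} {y w : α} (h1 : x < (y : WithBot α))
      (h2 : (y : WithBot α) < (w : WithBot α)) (hc : y ⋖ w) :
      TPcov (some ⟨(x, y), h1⟩) (some ⟨((y : WithBot α), w), h2⟩)
  | same {x : WithBot α} {y w : α} (h1 : x < (y : WithBot α))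
      (h2 : x < (w : WithBot α)) (hc : y ⋖ w) :
      TPcov (some ⟨(x, y), h1⟩) (some ⟨(x, w), h2⟩)
  | top {x : WithBot α} (h1 : x < ((⊤ : α) : WithBot α)) :
      TPcov (some ⟨(x, (⊤ : α)), h1⟩) none

/-- The strict order relation of `T(P)`, generated by the cover relation. -/
def TPlt : TP α → TP α → Prop := Relation.TransGen (TPcov α)

/-- The order relation of `T(P)`, generated by the cover relation. -/
def TPle : TP α → TP α → Prop := Relation.ReflTransGen (TPcov α)

/-- The minimum element `[-1̂, 0̂]` of `T(P)`. -/
def TPbot : TP α := some ⟨((⊥ : WithBot α), (⊥ : α)), WithBot.bot_lt_coe _⟩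

/-- The maximum element `1̂_{T(P)}` of `T(P)`. -/
def TPtop : TP α := none

/-- The rank function of `T(P)`: `ρ([x,y]) = ρ(y)` and `ρ(1̂_{T(P)}) = ρ(P) + 1`. -/
def TPrk (rk : α → ℕ) : TP α → ℕ
  | some p => rk p.1.2
  | none => rk (⊤ : α) + 1

theorem TPbot_ne_TPtop : TPbot α ≠ TPtop α := by exact Option.some_ne_none _

/-- The map `z : T(P) → P ∪ {2̂}` with `z([x,y]) = y` and `z(1̂_{T(P)}) = 2̂`. -/
def zmap : TP α → WithTop α
  | some p => (p.1.2 : WithTop α)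
  | none => ⊤

/-- The number of elements of the interval `[u,v]` of `P`, for `u, v ∈ P ∪ {2̂}`. -/
def intervalCard (u v : WithTop α) : ℕ :=
  Set.ncard {t : α | u ≤ (t : WithTop α) ∧ (t : WithTop α) ≤ v}

end TPoset

/-! ### The dual diamond product -/

/-- The strict order relation of the dual diamond product
`P ◇* Q = ((P ∖ {1̂}) × (Q ∖ {1̂})) ∪ {1̂}` (with `none` the new maximum), built from
the order relations `leA, ltA` and `leB, ltB` of the two factors. -/
def dsLT {A B : Type} (leA ltA : A → A → Prop) (leB ltB : B → B → Prop) :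
    Option (A × B) → Option (A × B) → Prop
  | some p, some q => (leA p.1 q.1 ∧ leB p.2 q.2) ∧ (ltA p.1 q.1 ∨ ltB p.2 q.2)
  | some _, none => True
  | none, _ => False

/-! ### EL-labelings -/

/-- The list of edge labels along a chain (given as a list of poset elements). -/
def labelsList {α Λ : Type} (lam : α → α → Λ) (l : List α) : List Λ :=
  (l.zip l.tail).map fun p => lam p.1 p.2

/-- `l` is a maximal (saturated) chain of the interval `[x,y]` with respect to the
cover relation `cov`: it runs from `x` to `y` and every step is a cover. -/
def IsMaxChainList {α : Type} (cov : α → α → Prop) (x y : α) (l : List α) : Prop :=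
  l.head? = some x ∧ l.getLast? = some y ∧ l.Chain' cov

/-- An `EL`-labeling of the poset whose cover relation is `cov`, with labels in the
linearly ordered set `(Λ, lle, llt)`: every interval has a unique rising maximal
chain, which moreover is lexicographically least among all maximal chains of the
interval. -/
def IsELLabeling (α Λ : Type) (lle llt : Λ → Λ → Prop)
    (cov : α → α → Prop) (lam : α → α → Λ) : Prop :=
  ∀ x y : α, Relation.ReflTransGen cov x y →
    ∃ l : List α, (IsMaxChainList cov x y l ∧ (labelsList lam l).Chain' lle) ∧
      (∀ l' : List α, IsMaxChainList cov x y l' →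
        (labelsList lam l').Chain' lle → l' = l) ∧
      (∀ l' : List α, IsMaxChainList cov x y l' →
        labelsList lam l = labelsList lam l' ∨
          List.Lex llt (labelsList lam l) (labelsList lam l'))

/-! ### Eulerian posets -/

/-- A graded poset is Eulerian if every nontrivial interval `[x,y]` has the
same number of elements of even rank as of odd rank. -/
def IsEulerian (α : Type) [PartialOrder α] (rk : α → ℕ) : Prop :=
  ∀ x y : α, x < y →
    Set.ncard {z : α | x ≤ z ∧ z ≤ y ∧ Even (rk z)} =
      Set.ncard {z : α | x ≤ z ∧ z ≤ y ∧ ¬ Even (rk z)}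

/-! ### The face lattice of the crosspolytope -/

/-- A face of the `n`-dimensional crosspolytope: a partial sign vector, i.e. the
pair `(S, ε)` of a subset `S ⊆ {1,…,n}` (the set of coordinates where the function
takes a value `some`) together with a sign function `ε` on `S`. -/
def CrossEl (n : ℕ) : Type := Fin n → Option Bool

/-- `(S,ε) ≤ (T,δ)` iff `S ⊆ T` and `δ` restricted to `S` is `ε`. -/
instance (n : ℕ) : PartialOrder (CrossEl n) where
  le f g := ∀ i s, f i = some s → g i = some s
  le_refl f i s h := h
  le_trans f g h fg gh i s hi := gh i s (fg i s hi)
  le_antisymm f g fg gf := by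
    funext i
    cases hf : f i with
    | some s => exact (fg i s hf).symm
    | none =>
      cases hg : g i with
      | some s => exact absurd (gf i s hg) (by simp [hf])
      | none => rfl

/-- The face lattice of the `n`-dimensional crosspolytope: all partial sign
vectors together with a new maximum element. -/
abbrev Cross (n : ℕ) : Type := WithTop (CrossEl n)

/-- The rank function of the face lattice of the crosspolytope:
`ρ(S,ε) = |S|` and the maximum has rank `n + 1`. -/
def crossRk (n : ℕ) : Cross n → ℕ
  | none => n + 1
  | some f => (Finset.univ.filter fun i : Fin n => (f i).isSome).card

/-- The minimal element (the empty face) of the crosspolytope face lattice. -/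
def crossBot (n : ℕ) : Cross n := WithTop.some (fun _ => none)

/-- The maximal element of the crosspolytope face lattice. -/
def crossTop (n : ℕ) : Cross n := ⊤

/-! ### Quasisymmetric functions -/

/-- The monomial quasisymmetric function `M_{(p₁,…,p_k)}`, as a formal power
series in the countably many commuting variables `t₁, t₂, …` (indexed by `ℕ`). -/
def MQ (R : Type) [CommRing R] (ps : List ℕ) : MvPowerSeries ℕ R :=
  fun m => if ((m.support.sort (· ≤ ·)).map fun i => m i) = ps then 1 else 0

/-- The `t`-part of a monomial in the variables `s` (index `none`) and
`t₁, t₂, …` (indices `some i`). -/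
def tpart (m : Option ℕ →₀ ℕ) : ℕ →₀ ℕ :=
  Finsupp.comapDomain some m (Option.some_injective ℕ).injOn

/-- The type B monomial quasisymmetric function `s^p · M_{(p₁,…,p_k)}`, a formal
power series in the variables `s` (index `none`) and `t₁, t₂, …` (indices `some i`). -/
def MB (R : Type) [CommRing R] (p : ℕ) (ps : List ℕ) : MvPowerSeries (Option ℕ) R :=
  fun m => if m none = p ∧
      (((tpart m).support.sort (· ≤ ·)).map fun i => tpart m i) = ps then 1 else 0

/-- The quasisymmetric function `F(P)` of the graded poset with strict order
relation `lt`, rank function `rk`, minimum `b` and maximum `t`: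
`F(P) = Σ_c M_{(ρ(x₀,x₁),…,ρ(x_{k-1},x_k))}` over all chains `c` from `b` to `t`. -/
def FQ (R : Type) [CommRing R] {α : Type} (lt : α → α → Prop) (rk : α → ℕ)
    (b t : α) : MvPowerSeries ℕ R :=
  ∑ᶠ (n : ℕ), ∑ᶠ (f : Fin (n + 1) → α)
    (_ : IsStrictChain lt f ∧ f 0 = b ∧ f (Fin.last n) = t),
    MQ R (List.ofFn fun i : Fin n => rk (f i.succ) - rk (f i.castSucc))

/-- The type B quasisymmetric function `F_B(P) = Σ_{0̂ < x ≤ 1̂} s^{ρ(x)-1}·F([x,1̂])`,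
written as a sum over all chains `0̂ < x₀ < x₁ < ⋯ < x_k = 1̂` of
`s^{ρ(x₀)-1}·M_{(ρ(x₀,x₁),…,ρ(x_{k-1},x_k))}`. -/
def FB (R : Type) [CommRing R] {α : Type} (lt : α → α → Prop) (rk : α → ℕ)
    (b t : α) : MvPowerSeries (Option ℕ) R :=
  ∑ᶠ (n : ℕ), ∑ᶠ (f : Fin (n + 1) → α)
    (_ : IsStrictChain lt f ∧ lt b (f 0) ∧ f (Fin.last n) = t),
    MB R (rk (f 0) - 1) (List.ofFn fun i : Fin n => rk (f i.succ) - rk (f i.castSucc))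

/-! ### Characters and the chain maps -/

/-- A character on `k⟨a,b⟩`: a linear functional which is multiplicative with
respect to Cartesian products of graded posets (of rank at least 1). -/
def IsCharacter (k : Type) [Field k] (G : AB k →ₗ[k] k) : Prop :=
  ∀ (α β : Type) [Fintype α] [Fintype β] [PartialOrder α] [PartialOrder β]
    [BoundedOrder α] [BoundedOrder β], ∀ (rkα : α → ℕ) (rkβ : β → ℕ),
    IsRankFun α rkα → IsRankFun β rkβ → 1 ≤ rkα ⊤ → 1 ≤ rkβ ⊤ →
    G (PsiRel k (· < ·) (fun p : α × β => rkα p.1 + rkβ p.2)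
        ((⊥ : α), (⊥ : β)) ((⊤ : α), (⊤ : β))) =
      G (PsiRel k (· < ·) rkα ⊥ ⊤) * G (PsiRel k (· < ·) rkβ ⊥ ⊤)

/-- The quasisymmetric function image `g̃F(P)` of the chain map of the second kind:
`Σ_c G(Ψ([x₀,x₁])) ⋯ G(Ψ([x_{k-1},x_k])) · M_{(ρ(x₀,x₁),…,ρ(x_{k-1},x_k))}`,
summed over all chains `c = {b = x₀ < ⋯ < x_k = t}`. -/
def gtF (k : Type) [Field k] (G : AB k →ₗ[k] k) {α : Type} (lt : α → α → Prop)
    (rk : α → ℕ) (b t : α) : MvPowerSeries ℕ k :=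
  ∑ᶠ (n : ℕ), ∑ᶠ (f : Fin (n + 1) → α)
    (_ : IsStrictChain lt f ∧ f 0 = b ∧ f (Fin.last n) = t),
    (∏ i : Fin n, G (PsiRel k lt rk (f i.castSucc) (f i.succ))) •
      MQ k (List.ofFn fun i : Fin n => rk (f i.succ) - rk (f i.castSucc))

/-- The type B quasisymmetric function image `gF_B(P) = Σ_{0̂ < x ≤ 1̂}
s^{ρ(x)-1}·g̃F([x,1̂])` of the chain map of the first kind, written as a sum over
all chains `0̂ < x₀ < ⋯ < x_k = 1̂`. -/
def gFB (k : Type) [Field k] (G : AB k →ₗ[k] k) {α : Type} (lt : α → α → Prop)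
    (rk : α → ℕ) (b t : α) : MvPowerSeries (Option ℕ) k :=
  ∑ᶠ (n : ℕ), ∑ᶠ (f : Fin (n + 1) → α)
    (_ : IsStrictChain lt f ∧ lt b (f 0) ∧ f (Fin.last n) = t),
    (∏ i : Fin n, G (PsiRel k lt rk (f i.castSucc) (f i.succ))) •
      MB k (rk (f 0) - 1) (List.ofFn fun i : Fin n => rk (f i.succ) - rk (f i.castSucc))

/-- The space of homogeneous ab-polynomials of degree `n`. -/
def ABhomog (k : Type) [Field k] (n : ℕ) : Submodule k (AB k) :=
  Submodule.span k {x : AB k | ∃ w : List Bool, w.length = n ∧ x = word k w}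

theorem onBasis_word {M : Type} [AddCommGroup M] [Module ℚ M] (f : List Bool → M)
    (l : List Bool) : onBasis ℚ f (word ℚ l) = f l := by
  simp [onBasis, word, MonoidAlgebra.of]

theorem AB_ext {M : Type} [AddCommGroup M] [Module ℚ M] {f g : AB ℚ →ₗ[ℚ] M}
    (h : ∀ l, f (word ℚ l) = g (word ℚ l)) : f = g := by
  apply MonoidAlgebra.lhom_ext'
  intro w
  ext
  exact h w.toList

theorem word_cons (x : Bool) (l : List Bool) : word ℚ (x :: l) = word ℚ [x] * word ℚ l := by
  simp only [word, ← map_mul]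
  rfl

theorem ev_mul_word (l : List Bool) :
    ev ℚ * word ℚ l = word ℚ (true :: l) - word ℚ (false :: l) := by
  rw [word_cons true, word_cons false, ev, av, bv, sub_mul]

theorem Amap_cons (x : Bool) (l : List Bool) :
    Amap ℚ (word ℚ (x :: l)) = (if x then 1 else 0) * Amap ℚ (word ℚ l) := by
  rw [word_cons, map_mul]
  congr 1
  simp [Amap, word]

theorem Cmap_word (l : List Bool) : Cmap ℚ (word ℚ l) = 2 * Amap ℚ (word ℚ l) +
    ∑ i ∈ Finset.range l.length,
      Amap ℚ (word ℚ (l.take i)) * Amap ℚ (word ℚ (l.drop (i + 1))) := by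
  simp [Cmap, Delta, onBasis_word]

theorem Cmap_diff (l : List Bool) : Cmap ℚ (word ℚ (true :: l)) - Cmap ℚ (word ℚ (false :: l))
    = Cmap ℚ (word ℚ l) := by
  simp only [Cmap_word, List.length_cons, Finset.sum_range_succ', List.take_succ_cons,
    List.drop_succ_cons, Amap_cons, List.take_zero]
  simp
  ring

theorem kappa_diff (l : List Bool) :
    kappa ℚ (word ℚ (true :: l)) - kappa ℚ (word ℚ (false :: l))
    = ev ℚ * kappa ℚ (word ℚ l) := by
  simp only [kappa, onBasis_word, ← sub_smul, Amap_cons, List.length_cons, pow_succ',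
    mul_smul_comm]
  simp

theorem nu_diff (l : List Bool) :
    nuMap ℚ (word ℚ (true :: l)) - nuMap ℚ (word ℚ (false :: l))
    = ev ℚ * nuMap ℚ (word ℚ l) := by
  simp only [nuMap, onBasis_word, List.length_cons, ← sub_smul, Cmap_diff, pow_succ',
    mul_smul_comm]

theorem segments_ne_nil (l : List Bool) (c : List ℕ) : segments l c ≠ [] := by
  cases c <;> simp [segments]

theorem chainProd_cons (s : List Bool) {r : List (List Bool)} (h : r ≠ []) :
    chainProd ℚ (s :: r) = nuMap ℚ (word ℚ s) * bv ℚ * chainProd ℚ r := by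
  cases r with
  | nil => exact absurd rfl h
  | cons t r => rw [chainProd]; simp

theorem segments_succ (x : Bool) (l : List Bool) (i : ℕ) (c : List ℕ) :
    segments (x :: l) ((i :: c).map (· + 1)) =
      (x :: l.take i) :: segments (l.drop (i + 1)) (c.map fun j => j - (i + 1)) := by
  simp only [List.map_cons, segments, List.take_succ_cons, List.drop_succ_cons, List.map_map]
  congr 2
  apply List.map_congr_left
  intro j _
  simp

theorem chain_diff (l : List Bool) (c : List ℕ) :
    chainProd ℚ (segments (true :: l) (c.map (· + 1))) -
      chainProd ℚ (segments (false :: l) (c.map (· + 1))) =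
    ev ℚ * chainProd ℚ (segments l c) := by
  cases c with
  | nil => simpa [segments, chainProd] using kappa_diff l
  | cons i c =>
    rw [segments_succ, segments_succ, segments, chainProd_cons _ (segments_ne_nil _ _),
      chainProd_cons _ (segments_ne_nil _ _), chainProd_cons _ (segments_ne_nil _ _),
      ← sub_mul, ← sub_mul, nu_diff]
    simp only [mul_assoc]

theorem sort_zero {n : ℕ} (S : Finset (Fin (n + 1))) (h : 0 ∈ S) :
    ∃ r, S.sort (· ≤ ·) = 0 :: r := by
  have hs : (S.sort (· ≤ ·)).Pairwise (· ≤ ·) := Finset.pairwise_sort S _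
  have hm : (0 : Fin (n + 1)) ∈ S.sort (· ≤ ·) := (Finset.mem_sort _).2 h
  cases hr : S.sort (· ≤ ·) with
  | nil => simp [hr] at hm
  | cons y r =>
    rw [hr] at hs hm
    refine ⟨r, ?_⟩
    rcases List.mem_cons.1 hm with h0 | h0
    · rw [← h0]
    · have := (List.pairwise_cons.1 hs).1 0 h0
      rw [Fin.le_zero_iff.1 this]

theorem sort_succ {n : ℕ} (S : Finset (Fin n)) :
    ((S.map (Fin.succEmb n)).sort (· ≤ ·)).map Fin.val =
      ((S.sort (· ≤ ·)).map Fin.val).map (· + 1) := by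
  have : (S.map (Fin.succEmb n)).sort (· ≤ ·) = (S.sort (· ≤ ·)).map Fin.succ := by
    refine List.Perm.eq_of_pairwise' (r := (· ≤ ·)) (Finset.pairwise_sort _ _) ?_ ?_
    · rw [List.pairwise_map]
      exact (Finset.pairwise_sort S (· ≤ ·)).imp (fun h => Fin.succ_le_succ_iff.2 h)
    · rw [List.perm_ext_iff_of_nodup (Finset.sort_nodup _ _)
        ((List.nodup_map_iff (Fin.succ_injective n)).2 (Finset.sort_nodup _ _))]
      simp
  rw [this]
  simp

theorem Tmap_cons (x : Bool) (l : List Bool) :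
    Tmap ℚ (word ℚ (x :: l)) = ∑ S : Finset (Fin (l.length + 1)),
      chainProd ℚ (segments (x :: l) ((S.sort (· ≤ ·)).map Fin.val)) := by
  rw [Tmap, onBasis_word]
  rfl

theorem Tmap_diff (l : List Bool) :
    Tmap ℚ (word ℚ (true :: l)) - Tmap ℚ (word ℚ (false :: l)) = ev ℚ * Tmap ℚ (word ℚ l) := by
  rw [Tmap_cons, Tmap_cons, Tmap, onBasis_word, ← Finset.sum_sub_distrib, Finset.mul_sum]
  symm
  refine Finset.sum_of_injOn (fun S : Finset (Fin l.length) => S.map (Fin.succEmb _))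
    (fun S _ T _ h => Finset.map_injective _ h) (fun _ _ => Finset.mem_coe.2 (Finset.mem_univ _)) ?_ ?_
  · intro S _ hS
    have h0 : 0 ∈ S := by
      by_contra h0
      apply hS
      refine ⟨Finset.univ.filter fun i => i.succ ∈ S, by simp, ?_⟩
      ext i
      refine Fin.cases ?_ (fun j => ?_) i
      · simp [h0, Fin.succ_ne_zero]
      · simp
    obtain ⟨r, hr⟩ := sort_zero S h0
    rw [hr]
    simp [segments]
  · intro S _
    rw [sort_succ]
    exact (chain_diff _ _).symm

theorem Tmap_ev (u : AB ℚ) : Tmap ℚ (ev ℚ * u) = ev ℚ * Tmap ℚ u := by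
  have : Tmap ℚ ∘ₗ LinearMap.mulLeft ℚ (ev ℚ) = LinearMap.mulLeft ℚ (ev ℚ) ∘ₗ Tmap ℚ := by
    apply AB_ext
    intro l
    simp only [LinearMap.comp_apply, LinearMap.mulLeft_apply, ev_mul_word, map_sub, Tmap_diff]
  exact LinearMap.congr_fun this u

theorem Hstar_ev (u : AB ℚ) : Hstar ℚ (ev ℚ * u) = ev ℚ * Hstar ℚ u := by
  have : Hstar ℚ ∘ₗ LinearMap.mulLeft ℚ (ev ℚ) = LinearMap.mulLeft ℚ (ev ℚ) ∘ₗ Hstar ℚ := by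
    apply AB_ext
    intro l
    simp only [LinearMap.comp_apply, LinearMap.mulLeft_apply, ev_mul_word, map_sub, Hstar,
      onBasis_word]
    cases l with
    | nil => simp
    | cons x l => simp [ev_mul_word]
  exact LinearMap.congr_fun this u

theorem Umap_ev (u : AB ℚ) : Umap ℚ (ev ℚ * u) = ev ℚ * Umap ℚ u := by
  simp only [Umap, LinearMap.comp_apply, LinearMap.mulRight_apply, mul_assoc, Tmap_ev, Hstar_ev]

/-- A left inverse of left multiplication by `a - b`. -/
def stripA : AB ℚ →ₗ[ℚ] AB ℚ :=
  onBasis ℚ fun w => if w.head? = some true then word ℚ w.tail else 0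

theorem stripA_ev (u : AB ℚ) : stripA (ev ℚ * u) = u := by
  have : stripA ∘ₗ LinearMap.mulLeft ℚ (ev ℚ) = LinearMap.id := by
    apply AB_ext
    intro l
    simp only [LinearMap.comp_apply, LinearMap.mulLeft_apply, ev_mul_word, map_sub, stripA,
      onBasis_word]
    simp
  exact LinearMap.congr_fun this u

theorem U_eigenvector_e_mul (u : AB ℚ) (lam : ℚ) (hu : u ≠ 0)
    (h : Umap ℚ u = lam • u) :
    ev ℚ * u ≠ 0 ∧ Umap ℚ (ev ℚ * u) = lam • (ev ℚ * u) := by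
  refine ⟨fun h0 => hu ?_, ?_⟩
  · rw [← stripA_ev u, h0, map_zero]
  · rw [Umap_ev, h, mul_smul_comm]

end Tcheb
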